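/- Let H be a real Hilbert space, C a nonempty closed, bounded and convex subset of H, and F : C × C → C a weakly nonexpansive mapping that is demicompact at 0, i.e., for any bounded sequence (xₙ) in C with xₙ − F(xₙ, xₙ) → 0 strongly, there exist a subsequence (xₙⱼ) and x ∈ C such that xₙⱼ → x strongly and x − F(x,x) = 0. Then for every λ ∈ (0,1) and x₀ ∈ C, the sequence defined by xₙ₊₁ = λxₙ + (1−λ)F(xₙ, xₙ) converges strongly to some q ∈ C with F(q,q) = q. -/

import Mathlib

open Filter Topology

theorem approx_fix_aux {H : Type*} [NormedAddCommGroup H] [InnerProductSpace ℝ H]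
    [CompleteSpace H] (C : Set H) (hcl : IsClosed C) (hconv : Convex ℝ C)
    (T : H → H) (hT : ∀ x ∈ C, T x ∈ C)
    (hn : ∀ x ∈ C, ∀ y ∈ C, ‖T x - T y‖ ≤ ‖x - y‖) (z : H) (hz : z ∈ C)
    (t : ℝ) (ht0 : 0 < t) (ht1 : t ≤ 1) :
    ∃ w ∈ C, w - T w = t • (z - T w) := by
  haveI : CompleteSpace C := hcl.completeSpace_coe
  haveI : Nonempty C := ⟨⟨z, hz⟩⟩
  let G : C → C := fun w => ⟨t • z + (1 - t) • T w,
    hconv hz (hT w w.2) ht0.le (by linarith) (by ring)⟩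
  have hG : ContractingWith (Real.toNNReal (1 - t)) G := by
    refine ⟨?_, ?_⟩
    · rw [Real.toNNReal_lt_one]; linarith
    · refine LipschitzWith.of_dist_le_mul fun u v => ?_
      rw [Real.coe_toNNReal _ (by linarith), Subtype.dist_eq, Subtype.dist_eq, dist_eq_norm,
        dist_eq_norm]
      have : (G u : H) - G v = (1 - t) • (T u - T v) := by
        simp only [G]; module
      rw [this, norm_smul, Real.norm_of_nonneg (by linarith)]
      exact mul_le_mul_of_nonneg_left (hn _ u.2 _ v.2) (by linarith)
  obtain ⟨w, hw⟩ : ∃ w : C, G w = w := ⟨_, hG.fixedPoint_isFixedPt⟩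
  refine ⟨w, w.2, ?_⟩
  have h : (G w : H) = w := congrArg Subtype.val hw
  simp only [G] at h
  calc (w : H) - T w = (t • z + (1 - t) • T w) - T w := congrArg (· - T w) h.symm
    _ = _ := by module

theorem conv_comb_aux {H : Type*} [NormedAddCommGroup H] [InnerProductSpace ℝ H]
    (u v : H) (l : ℝ) :
    ‖l • u + (1 - l) • v‖ ^ 2 = l * ‖u‖ ^ 2 + (1 - l) * ‖v‖ ^ 2 - l * (1 - l) * ‖u - v‖ ^ 2 := by
  rw [norm_add_sq_real, norm_sub_sq_real, norm_smul, norm_smul, inner_smul_left, inner_smul_right,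
    mul_pow, mul_pow, Real.norm_eq_abs, Real.norm_eq_abs, sq_abs, sq_abs]
  simp only [conj_trivial]
  ring

/-- If `F : C × C → C` is weakly nonexpansive on a nonempty bounded
closed convex subset `C` of a real Hilbert space and is demicompact at `0` (any bounded
sequence `(xₙ)` in `C` with `xₙ − F(xₙ,xₙ) → 0` has a subsequence converging strongly to
some `x ∈ C` with `x − F(x,x) = 0`), then for every `λ ∈ (0,1)` and `x₀ ∈ C`, the
Krasnoselskij iteration `xₙ₊₁ = λxₙ + (1−λ)F(xₙ,xₙ)` converges strongly to some `q ∈ C`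
with `F(q,q) = q`. -/
theorem krasnoselskij_strong_convergence_demicompact_at_zero
    {H : Type*} [NormedAddCommGroup H] [InnerProductSpace ℝ H] [CompleteSpace H]
    (C : Set H) (hne : C.Nonempty) (hbdd : Bornology.IsBounded C)
    (hcl : IsClosed C) (hconv : Convex ℝ C)
    (F : H → H → H) (hmaps : ∀ x ∈ C, ∀ y ∈ C, F x y ∈ C)
    (a b : ℝ) (ha : 0 ≤ a) (hb : 0 ≤ b) (hab : a + b ≤ 1)
    (hF : ∀ x ∈ C, ∀ y ∈ C, ∀ u ∈ C, ∀ v ∈ C,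
      ‖F x y - F u v‖ ≤ a * ‖x - u‖ + b * ‖y - v‖)
    (hdemi0 : ∀ x : ℕ → H, (∀ n, x n ∈ C) →
      Bornology.IsBounded (Set.range x) →
      Tendsto (fun n => x n - F (x n) (x n)) atTop (𝓝 0) →
      ∃ φ : ℕ → ℕ, StrictMono φ ∧ ∃ q ∈ C,
        Tendsto (x ∘ φ) atTop (𝓝 q) ∧ q - F q q = 0) :
    ∀ l : ℝ, 0 < l → l < 1 → ∀ x : ℕ → H, x 0 ∈ C →
      (∀ n, x (n + 1) = l • x n + (1 - l) • F (x n) (x n)) →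
      ∃ q ∈ C, F q q = q ∧ Tendsto x atTop (𝓝 q) := by
  intro l hl0 hl1 x hx0 hx
  have hn : ∀ x ∈ C, ∀ y ∈ C, ‖F x x - F y y‖ ≤ ‖x - y‖ := fun x hx y hy => by
    have := hF x hx x hx y hy y hy
    nlinarith [norm_nonneg (x - y)]
  have hxC : ∀ n, x n ∈ C := by
    intro n
    induction n with
    | zero => exact hx0
    | succ k ih =>
      rw [hx]
      exact hconv ih (hmaps _ ih _ ih) hl0.le (by linarith) (by ring)
  obtain ⟨p, hpC, hp⟩ : ∃ p ∈ C, F p p = p := by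
    have key : ∀ n : ℕ, ∃ w ∈ C, w - F w w = (1 / ((n : ℝ) + 1)) • (x 0 - F w w) := fun n =>
      approx_fix_aux C hcl hconv (fun x => F x x) (fun x hx => hmaps x hx x hx) hn (x 0) hx0 _
        (by positivity) (by rw [div_le_one (by positivity)]; linarith [n.cast_nonneg (α := ℝ)])
    choose w hwC hw using key
    obtain ⟨R, hR⟩ := Metric.isBounded_iff.1 hbdd
    obtain ⟨φ, -, q, hq, -, h⟩ := hdemi0 w hwC
      (hbdd.subset (by rintro _ ⟨n, rfl⟩; exact hwC n)) (by
        have h0 : Tendsto (fun n : ℕ => (1 / ((n : ℝ) + 1)) * R) atTop (𝓝 0) := by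
          simpa using (tendsto_one_div_add_atTop_nhds_zero_nat (𝕜 := ℝ)).mul_const R
        refine squeeze_zero_norm (fun n => ?_) h0
        rw [hw, norm_smul, Real.norm_of_nonneg (by positivity), ← dist_eq_norm]
        exact mul_le_mul_of_nonneg_left (hR hx0 (hmaps _ (hwC n) _ (hwC n))) (by positivity))
    exact ⟨q, hq, (sub_eq_zero.1 h).symm⟩
  have step : ∀ q ∈ C, F q q = q → ∀ n, ‖x (n + 1) - q‖ ^ 2 ≤
      ‖x n - q‖ ^ 2 - l * (1 - l) * ‖x n - F (x n) (x n)‖ ^ 2 := by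
    intro q hq hfq n
    have e : x (n + 1) - q = l • (x n - q) + (1 - l) • (F (x n) (x n) - q) := by
      rw [hx]; module
    have h1 : ‖F (x n) (x n) - q‖ ≤ ‖x n - q‖ := by
      simpa [hfq] using hn _ (hxC n) q hq
    have h2 : ‖F (x n) (x n) - q‖ ^ 2 ≤ ‖x n - q‖ ^ 2 := by gcongr
    rw [e, conv_comb_aux, sub_sub_sub_cancel_right]
    nlinarith
  have hll : 0 < l * (1 - l) := mul_pos hl0 (by linarith)
  have anti : ∀ q ∈ C, F q q = q → Antitone fun n => ‖x n - q‖ ^ 2 := fun q hq hfq =>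
    antitone_nat_of_succ_le fun n => by
      have := step q hq hfq n
      nlinarith [mul_nonneg hll.le (sq_nonneg ‖x n - F (x n) (x n)‖)]
  have hlim := tendsto_atTop_ciInf (anti p hpC hp)
    ⟨0, by rintro _ ⟨n, rfl⟩; positivity⟩
  have hd := (hlim.sub (hlim.comp (tendsto_add_atTop_nat 1))).div_const (l * (1 - l))
  rw [sub_self, zero_div] at hd
  have hsq : Tendsto (fun n => ‖x n - F (x n) (x n)‖ ^ 2) atTop (𝓝 0) := by
    refine squeeze_zero (fun n => by positivity) (fun n => ?_) hd
    rw [le_div_iff₀ hll]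
    have := step p hpC hp n
    simp only [Function.comp]
    linarith
  have hz : ∀ f : ℕ → H, Tendsto (fun n => ‖f n‖ ^ 2) atTop (𝓝 0) → Tendsto f atTop (𝓝 0) := by
    intro f hf
    rw [tendsto_zero_iff_norm_tendsto_zero]
    simpa [Real.sqrt_sq] using hf.sqrt
  obtain ⟨φ, hφ, q, hq, hφq, h⟩ := hdemi0 x hxC
    (hbdd.subset (by rintro _ ⟨n, rfl⟩; exact hxC n)) (hz _ hsq)
  have hfq : F q q = q := (sub_eq_zero.1 h).symm
  refine ⟨q, hq, hfq, ?_⟩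
  rw [← tendsto_sub_nhds_zero_iff]
  apply hz
  have hl2 := tendsto_atTop_ciInf (anti q hq hfq)
    ⟨0, by rintro _ ⟨n, rfl⟩; positivity⟩
  have hs : Tendsto (fun n => ‖x (φ n) - q‖ ^ 2) atTop (𝓝 0) := by
    simpa using ((hφq.sub_const q).norm.pow 2)
  rwa [tendsto_nhds_unique (hl2.comp hφ.tendsto_atTop) hs] at hl2
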